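/- Let d ∈ ℕ with d ≥ 2 and let M > 0. Then there exists a Res-KAN ×²_d : ℝ^d → ℝ, whose activation coefficient matrices are supported only on the ReLU and ReLU² basis entries (so the sparsity rule is satisfied for every smoothness parameter α > 0), with depth 2(d−1), width at most d+4, and at most d² + 33d − 36 nonzero parameters, such that ×²_d(x) = ∏_{i=1}^d x_i for every x ∈ [−M, M]^d. -/

import Mathlib

open MeasureTheory Filter Set
open scoped BigOperators ENNReal NNReal

noncomputable section

/-- ReLU activation. -/
def relu (t : ℝ) : ℝ := max t 0

/-- Cardinal B-spline of order `I` (with the indicator convention for `I = 0`). -/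
def cardBSpline (I : ℕ) (x : ℝ) : ℝ :=
  if I = 0 then (if 0 ≤ x ∧ x < 1 then 1 else 0)
  else ∑ j ∈ Finset.range (I + 2),
    ((-1 : ℝ) ^ j * ((I + 1).choose j : ℝ) / (Nat.factorial I : ℝ)) * (relu (x - j)) ^ I

/-- The dictionary `{𝒩_0, …, 𝒩_I, ReLU, ReLU²}` indexed by `Fin (I+3)`. -/
def kanBasis (I : ℕ) (i : Fin (I + 3)) : ℝ → ℝ :=
  if (i : ℕ) ≤ I then cardBSpline (i : ℕ)
  else if (i : ℕ) = I + 1 then relu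
  else fun t => (relu t) ^ 2

/-- A Res-KAN layer with spline-order parameter `I`. -/
structure ResKANLayer (I din dout : ℕ) where
  A : Matrix (Fin dout) (Fin din) ℝ
  b : Fin dout → ℝ
  G : Matrix (Fin dout) (Fin din) ℝ
  β : Matrix (Fin (I + 3)) (Fin dout) ℝ
  G_diag : ∀ (i : Fin dout) (j : Fin din), (i : ℕ) ≠ (j : ℕ) → G i j = 0

/-- The action of a Res-KAN layer: `x ↦ σ_β•(Ax + b) + Gx`. -/
def ResKANLayer.apply {I din dout : ℕ} (ℓ : ResKANLayer I din dout)
    (x : Fin din → ℝ) : Fin dout → ℝ := fun j =>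
  (∑ i : Fin (I + 3), ℓ.β i j * kanBasis I i ((ℓ.A.mulVec x + ℓ.b) j)) + ℓ.G.mulVec x j

/-- A residual Kolmogorov–Arnold network from `ℝ^d` to `ℝ^D` with `L` hidden layers. -/
structure ResKAN (I d D : ℕ) where
  L : ℕ
  dims : ℕ → ℕ
  dims_zero : dims 0 = d
  layers : ∀ l : ℕ, ResKANLayer I (dims l) (dims (l + 1))
  Ahead : Matrix (Fin D) (Fin (dims L)) ℝ
  bhead : Fin D → ℝ

/-- The hidden state `f^{(l)}`. -/
def ResKAN.hidden {I d D : ℕ} (net : ResKAN I d D) :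
    (l : ℕ) → (Fin d → ℝ) → Fin (net.dims l) → ℝ
  | 0 => fun x i => x (Fin.cast net.dims_zero i)
  | (l + 1) => fun x => (net.layers l).apply (net.hidden l x)

/-- Evaluation of a Res-KAN: `f̂ = A^{(L+1)} f^{(L)} + b^{(L+1)}`. -/
def ResKAN.eval {I d D : ℕ} (net : ResKAN I d D) (x : Fin d → ℝ) : Fin D → ℝ :=
  net.Ahead.mulVec (net.hidden net.L x) + net.bhead

/-- Depth of a Res-KAN: the number of hidden layers. -/
def ResKAN.depth {I d D : ℕ} (net : ResKAN I d D) : ℕ := net.L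

/-- Width of a Res-KAN: the maximum of the layer dimensions `d_1, …, d_L` and `d_{L+1} = D`. -/
def ResKAN.width {I d D : ℕ} (net : ResKAN I d D) : ℕ :=
  max ((Finset.range net.L).sup fun l => net.dims (l + 1)) D

/-- Number of nonzero entries of a real matrix. -/
def matNnz {m n : ℕ} (M : Matrix (Fin m) (Fin n) ℝ) : ℕ :=
  {p : Fin m × Fin n | M p.1 p.2 ≠ 0}.ncard

/-- Number of nonzero entries of a real vector. -/
def vecNnz {m : ℕ} (v : Fin m → ℝ) : ℕ := {i : Fin m | v i ≠ 0}.ncard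

/-- Number of nonzero parameters of a Res-KAN layer. -/
def ResKANLayer.nnz {I din dout : ℕ} (ℓ : ResKANLayer I din dout) : ℕ :=
  matNnz ℓ.A + vecNnz ℓ.b + matNnz ℓ.G + matNnz ℓ.β

/-- Number of nonzero parameters of a Res-KAN. -/
def ResKAN.nnz {I d D : ℕ} (net : ResKAN I d D) : ℕ :=
  (∑ l ∈ Finset.range net.L, (net.layers l).nnz) + matNnz net.Ahead + vecNnz net.bhead

/-- The sparsity rule for smoothness parameter `α`: the coefficients of the B-splines of
order `< ⌈α⌉` vanish. -/
def ResKANLayer.Sparsity {I din dout : ℕ} (ℓ : ResKANLayer I din dout) (α : ℝ) : Prop :=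
  ∀ (i : Fin (I + 3)) (j : Fin dout), (i : ℕ) ≤ I → (i : ℕ) < ⌈α⌉₊ → ℓ.β i j = 0

/-- The sparsity rule for a whole network. -/
def ResKAN.Sparsity {I d D : ℕ} (net : ResKAN I d D) (α : ℝ) : Prop :=
  ∀ l < net.L, (net.layers l).Sparsity α

/-- The class `Res-KAN_{L,W}^{I,α}(ℝ^d, ℝ)` of real-valued Res-KANs with `L` hidden layers
and width at most `W`, satisfying the sparsity rule for `α`. -/
def ResKANClass (I : ℕ) (α : ℝ) (L W d : ℕ) : Set ((Fin d → ℝ) → ℝ) :=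
  {f | ∃ net : ResKAN I d 1, net.L = L ∧ net.width ≤ W ∧ net.Sparsity α ∧
        ∀ x, f x = net.eval x 0}

end

/-!
The product is formed by multiplying the last two coordinates until one is left; each
multiplication takes two layers. By polarization `4 a p = (a + p)² - (p - a)²`. If `C ≥ |a| + |p|`,
then `r = p ± a + C` is nonnegative, so `ReLU(r)² - 2 C ReLU(r) = (p ± a)² - C²`, and a first layer
computes these two numbers `s` and `t` exactly. Since `t ≤ 0`, also `-t = ReLU(-t)`, so a second
layer obtains `s / 4 + ReLU(-t) / 4 = a p`, reading `s` off the residual connection. The remaining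
coordinates are carried along by the diagonal residual connection at the cost of one parameter each.

A single `C` serves all steps: replacing `a, p` by `a p` does not increase `∏ i, (1 + |x i|)`, and
this product dominates `|a| + |p|`.
-/

noncomputable section

open scoped Matrix

section AppendedVectors

lemma exists_eq_append_pair {α : Type*} {n : ℕ} (x : Fin (n + 2) → α) :
    ∃ u a p, x = Fin.append u ![a, p] := by
  refine ⟨fun i => x (Fin.castAdd 2 i), x (Fin.natAdd n 0), x (Fin.natAdd n 1), ?_⟩
  funext i
  cases i using Fin.addCases with
  | left i => simp
  | right i => fin_cases i <;> simp

lemma append_dotProduct_append {m n : ℕ} (u u' : Fin m → ℝ) (v v' : Fin n → ℝ) :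
    Fin.append u v ⬝ᵥ Fin.append u' v' = u ⬝ᵥ u' + v ⬝ᵥ v' := by
  simp [dotProduct, Fin.sum_univ_add]

/-- The block diagonal matrix with blocks `A` and `B`, indexed by `Fin` so that it acts on appended
vectors. -/
def finBlockDiag {k l m n : ℕ} (A : Matrix (Fin k) (Fin l) ℝ) (B : Matrix (Fin m) (Fin n) ℝ) :
    Matrix (Fin (k + m)) (Fin (l + n)) ℝ :=
  Fin.append (fun i => Fin.append (A i) 0) (fun i => Fin.append 0 (B i))

lemma finBlockDiag_mulVec_append {k l m n : ℕ} (A : Matrix (Fin k) (Fin l) ℝ)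
    (B : Matrix (Fin m) (Fin n) ℝ) (u : Fin l → ℝ) (v : Fin n → ℝ) :
    finBlockDiag A B *ᵥ Fin.append u v = Fin.append (A *ᵥ u) (B *ᵥ v) := by
  ext i
  cases i using Fin.addCases <;> simp [finBlockDiag, Matrix.mulVec, append_dotProduct_append]

end AppendedVectors

section NonzeroEntries

lemma vecNnz_eq_sum {m : ℕ} (v : Fin m → ℝ) : vecNnz v = ∑ i, if v i ≠ 0 then 1 else 0 := by
  rw [vecNnz, Set.ncard_eq_toFinset_card', Set.toFinset_ofPred, Finset.card_filter]

lemma matNnz_eq_sum_vecNnz {m n : ℕ} (A : Matrix (Fin m) (Fin n) ℝ) :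
    matNnz A = ∑ i, vecNnz (A i) := by
  simp only [vecNnz_eq_sum]
  rw [matNnz, Set.ncard_eq_toFinset_card', Set.toFinset_ofPred, Finset.card_filter,
    Fintype.sum_prod_type]

lemma vecNnz_le {m : ℕ} (v : Fin m → ℝ) : vecNnz v ≤ m :=
  (Set.ncard_le_card _).trans_eq (Nat.card_fin m)

lemma matNnz_le_mul {m n : ℕ} (A : Matrix (Fin m) (Fin n) ℝ) : matNnz A ≤ m * n :=
  (Set.ncard_le_card _).trans_eq (by simp)

@[simp]
lemma vecNnz_zero {m : ℕ} : vecNnz (0 : Fin m → ℝ) = 0 := by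
  simp [vecNnz_eq_sum]

@[simp]
lemma matNnz_zero {m n : ℕ} : matNnz (0 : Matrix (Fin m) (Fin n) ℝ) = 0 := by
  simp [matNnz]

@[simp]
lemma matNnz_one {n : ℕ} : matNnz (1 : Matrix (Fin n) (Fin n) ℝ) = n := by
  simp [matNnz_eq_sum_vecNnz, vecNnz_eq_sum, Matrix.one_apply]

lemma vecNnz_append {m n : ℕ} (u : Fin m → ℝ) (v : Fin n → ℝ) :
    vecNnz (Fin.append u v) = vecNnz u + vecNnz v := by
  simp [vecNnz_eq_sum, Fin.sum_univ_add]

lemma matNnz_finBlockDiag {k l m n : ℕ} (A : Matrix (Fin k) (Fin l) ℝ)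
    (B : Matrix (Fin m) (Fin n) ℝ) : matNnz (finBlockDiag A B) = matNnz A + matNnz B := by
  rw [matNnz_eq_sum_vecNnz, matNnz_eq_sum_vecNnz, matNnz_eq_sum_vecNnz, Fin.sum_univ_add]
  simp [finBlockDiag, vecNnz_append]

end NonzeroEntries

section ReluCoefficients

variable {I m : ℕ}

/-- The activation coefficients giving neuron `j` the activation
`t ↦ a j * relu t + q j * relu t ^ 2`. -/
def reluCoeff (I : ℕ) (a q : Fin m → ℝ) : Matrix (Fin (I + 3)) (Fin m) ℝ :=
  fun i => if (i : ℕ) ≤ I then 0 else if (i : ℕ) = I + 1 then a else q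

lemma sum_reluCoeff_mul_kanBasis (a q : Fin m → ℝ) (j : Fin m) (t : ℝ) :
    ∑ i, reluCoeff I a q i j * kanBasis I i t = a j * relu t + q j * relu t ^ 2 := by
  rw [Fin.sum_univ_castSucc, Fin.sum_univ_castSucc, Finset.sum_eq_zero]
  · simp [reluCoeff, kanBasis]
  · intro i _
    simp [reluCoeff, Nat.le_of_lt_succ i.isLt]

lemma matNnz_reluCoeff (a q : Fin m → ℝ) : matNnz (reluCoeff I a q) = vecNnz a + vecNnz q := by
  rw [matNnz_eq_sum_vecNnz, Fin.sum_univ_castSucc, Fin.sum_univ_castSucc, Finset.sum_eq_zero]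
  · simp [reluCoeff]
  · intro i _
    simp [reluCoeff, Nat.le_of_lt_succ i.isLt]

end ReluCoefficients

namespace ResKANLayer

variable {I din dout : ℕ}

instance : Inhabited (ResKANLayer I din dout) := ⟨⟨0, 0, 0, 0, fun _ _ _ => rfl⟩⟩

/-- A layer whose activations do not involve the B-splines, only `relu` and `relu ^ 2`. -/
def SplineFree (ℓ : ResKANLayer I din dout) : Prop :=
  ∀ (i : Fin (I + 3)) (j : Fin dout), (i : ℕ) ≤ I → ℓ.β i j = 0

lemma splineFree_of_β_eq {ℓ : ResKANLayer I din dout} {a q : Fin dout → ℝ}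
    (h : ℓ.β = reluCoeff I a q) : ℓ.SplineFree := fun i j hi => by
  simp [h, reluCoeff, hi]

lemma apply_of_β_eq {ℓ : ResKANLayer I din dout} {a q : Fin dout → ℝ}
    (h : ℓ.β = reluCoeff I a q) (x : Fin din → ℝ) (j : Fin dout) :
    ℓ.apply x j = a j * relu ((ℓ.A *ᵥ x + ℓ.b) j) + q j * relu ((ℓ.A *ᵥ x + ℓ.b) j) ^ 2
      + (ℓ.G *ᵥ x) j := by
  rw [ResKANLayer.apply, h, sum_reluCoeff_mul_kanBasis]

/-- The layer that carries the first `n` coordinates along its residual connection and applies `ℓ`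
to the remaining ones. -/
def carry (n : ℕ) (ℓ : ResKANLayer I din dout) : ResKANLayer I (n + din) (n + dout) where
  A := finBlockDiag 0 ℓ.A
  b := Fin.append 0 ℓ.b
  G := finBlockDiag 1 ℓ.G
  β := fun i => Fin.append 0 (ℓ.β i)
  G_diag i j hij := by
    cases i using Fin.addCases <;> cases j using Fin.addCases
    case left.left i j =>
      simpa [finBlockDiag] using Matrix.one_apply_ne (Fin.val_ne_iff.1 hij)
    case right.right i j =>
      simpa [finBlockDiag] using ℓ.G_diag i j (by simpa using hij)
    all_goals simp [finBlockDiag]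

lemma carry_apply_append (n : ℕ) (ℓ : ResKANLayer I din dout) (u : Fin n → ℝ) (v : Fin din → ℝ) :
    (ℓ.carry n).apply (Fin.append u v) = Fin.append u (ℓ.apply v) := by
  ext j
  cases j using Fin.addCases <;>
    simp [ResKANLayer.apply, carry, finBlockDiag_mulVec_append]

lemma nnz_carry (n : ℕ) (ℓ : ResKANLayer I din dout) : (ℓ.carry n).nnz = n + ℓ.nnz := by
  have hβ : matNnz (ℓ.carry n).β = matNnz ℓ.β := by
    rw [matNnz_eq_sum_vecNnz, matNnz_eq_sum_vecNnz]
    simp [carry, vecNnz_append]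
  rw [nnz, nnz, hβ]
  simp only [carry, matNnz_finBlockDiag, vecNnz_append, matNnz_zero, vecNnz_zero, matNnz_one]
  ring

lemma SplineFree.carry (n : ℕ) {ℓ : ResKANLayer I din dout} (h : ℓ.SplineFree) :
    (ℓ.carry n).SplineFree := by
  intro i j hi
  cases j using Fin.addCases <;> simp [ResKANLayer.carry, h i _ hi]

end ResKANLayer

namespace ResKAN

variable {I d m D : ℕ}

/-- The affine map `x ↦ A x + b` as a Res-KAN without hidden layers. Its layers are never
evaluated. -/
def ofAffine (I : ℕ) (A : Matrix (Fin D) (Fin d) ℝ) (b : Fin D → ℝ) : ResKAN I d D where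
  L := 0
  dims _ := d
  dims_zero := rfl
  layers _ := default
  Ahead := A
  bhead := b

/-- The Res-KAN that applies the layer `ℓ` first and then `net`. -/
def cons (ℓ : ResKANLayer I d m) (net : ResKAN I m D) : ResKAN I d D where
  L := net.L + 1
  dims
    | 0 => d
    | l + 1 => net.dims l
  dims_zero := rfl
  layers
    | 0 => (net.dims_zero.symm ▸ ℓ : ResKANLayer I d (net.dims 0))
    | l + 1 => net.layers l
  Ahead := net.Ahead
  bhead := net.bhead

lemma hidden_cons (ℓ : ResKANLayer I d m) (net : ResKAN I m D) (l : ℕ) (x : Fin d → ℝ) :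
    (cons ℓ net).hidden (l + 1) x = net.hidden l (ℓ.apply x) := by
  obtain ⟨L, dims, rfl, layers, A, b⟩ := net
  induction l with
  | zero => rfl
  | succ l ih => exact congrArg (layers l).apply ih

lemma eval_ofAffine (A : Matrix (Fin D) (Fin d) ℝ) (b : Fin D → ℝ) (x : Fin d → ℝ) :
    (ofAffine I A b).eval x = A *ᵥ x + b := rfl

lemma eval_cons (ℓ : ResKANLayer I d m) (net : ResKAN I m D) (x : Fin d → ℝ) :
    (cons ℓ net).eval x = net.eval (ℓ.apply x) :=
  congrArg (fun y => net.Ahead *ᵥ y + net.bhead) (hidden_cons ℓ net net.L x)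

lemma depth_cons (ℓ : ResKANLayer I d m) (net : ResKAN I m D) :
    (cons ℓ net).depth = net.depth + 1 := rfl

lemma width_ofAffine (A : Matrix (Fin D) (Fin d) ℝ) (b : Fin D → ℝ) :
    (ofAffine I A b).width = D := by
  simp [width, ofAffine]

lemma width_cons (ℓ : ResKANLayer I d m) (net : ResKAN I m D) :
    (cons ℓ net).width = max m net.width := by
  obtain ⟨L, dims, rfl, layers, A, b⟩ := net
  simp only [width, cons, Finset.range_add_one', Finset.sup_insert, Finset.sup_map, max_assoc]
  rfl

lemma nnz_ofAffine (A : Matrix (Fin D) (Fin d) ℝ) (b : Fin D → ℝ) :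
    (ofAffine I A b).nnz = matNnz A + vecNnz b := by
  simp [nnz, ofAffine]

lemma nnz_cons (ℓ : ResKANLayer I d m) (net : ResKAN I m D) :
    (cons ℓ net).nnz = ℓ.nnz + net.nnz := by
  obtain ⟨L, dims, rfl, layers, A, b⟩ := net
  simp only [nnz, cons, Finset.sum_range_succ']
  ring

/-- A Res-KAN all of whose hidden layers are free of B-splines. -/
def SplineFree (net : ResKAN I d D) : Prop :=
  ∀ l < net.L, (net.layers l).SplineFree

lemma splineFree_ofAffine (A : Matrix (Fin D) (Fin d) ℝ) (b : Fin D → ℝ) :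
    (ofAffine I A b).SplineFree :=
  fun l hl => absurd hl (Nat.not_lt_zero l)

lemma SplineFree.cons {ℓ : ResKANLayer I d m} {net : ResKAN I m D} (hℓ : ℓ.SplineFree)
    (hnet : net.SplineFree) : (cons ℓ net).SplineFree := by
  obtain ⟨L, dims, rfl, layers, A, b⟩ := net
  rintro (_ | l) hl
  · exact hℓ
  · exact hnet l (Nat.lt_of_succ_lt_succ hl)

lemma SplineFree.sparsity {net : ResKAN I d D} (h : net.SplineFree) (α : ℝ) : net.Sparsity α :=
  fun l hl i j hi _ => h l hl i j hi

end ResKAN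

section PairMultiplication

/-- The layer mapping `(a, p)` to `((a + p)² - C², (p - a)² - C²)` when `|a| + |p| ≤ C`. -/
def squareLayer (I : ℕ) (C : ℝ) : ResKANLayer I 2 2 where
  A := !![1, 1; -1, 1]
  b := ![C, C]
  G := 0
  β := reluCoeff I ![-2 * C, -2 * C] ![1, 1]
  G_diag _ _ _ := rfl

/-- The layer mapping `(s, t)` to `s / 4 + relu (-t) / 4`. -/
def combineLayer (I : ℕ) : ResKANLayer I 2 1 where
  A := !![0, -1]
  b := 0
  G := !![1 / 4, 0]
  β := reluCoeff I ![1 / 4] 0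
  G_diag i j hij := by
    fin_cases i
    fin_cases j <;> simp_all

lemma relu_of_nonneg {t : ℝ} (h : 0 ≤ t) : relu t = t :=
  max_eq_left h

lemma relu_sq_sub_mul_relu {C s : ℝ} (h : |s| ≤ C) :
    -2 * C * relu (s + C) + relu (s + C) ^ 2 = s ^ 2 - C ^ 2 := by
  rw [relu_of_nonneg (by linarith [neg_le_of_abs_le h])]
  ring

lemma squareLayer_apply (I : ℕ) {C a p : ℝ} (h : |a| + |p| ≤ C) :
    (squareLayer I C).apply ![a, p] = ![(a + p) ^ 2 - C ^ 2, (p - a) ^ 2 - C ^ 2] := by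
  have hadd : |a + p| ≤ C := (abs_add_le a p).trans h
  have hsub : |p - a| ≤ C := (abs_sub p a).trans (by linarith)
  rw [← relu_sq_sub_mul_relu hadd, ← relu_sq_sub_mul_relu hsub]
  ext j
  rw [ResKANLayer.apply_of_β_eq rfl]
  fin_cases j <;> simp [squareLayer, sub_eq_neg_add]

lemma combineLayer_apply (I : ℕ) {s t : ℝ} (ht : t ≤ 0) :
    (combineLayer I).apply ![s, t] = ![(s - t) / 4] := by
  have hrelu : relu (-t) = -t := relu_of_nonneg (by linarith)
  ext j
  rw [ResKANLayer.apply_of_β_eq rfl]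
  fin_cases j
  suffices 1 / 4 * -t + s * (1 / 4) = (s - t) / 4 by simpa [combineLayer, hrelu] using this
  ring

lemma combineLayer_apply_squareLayer_apply (I : ℕ) {C a p : ℝ} (h : |a| + |p| ≤ C) :
    (combineLayer I).apply ((squareLayer I C).apply ![a, p]) = ![a * p] := by
  have hsq : (p - a) ^ 2 ≤ C ^ 2 :=
    sq_le_sq.2 (((abs_sub p a).trans (by linarith)).trans (le_abs_self C))
  rw [squareLayer_apply I h, combineLayer_apply I (sub_nonpos.2 hsq)]
  congr 1
  ring

lemma nnz_squareLayer_le (I : ℕ) (C : ℝ) : (squareLayer I C).nnz ≤ 10 := by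
  have hA : matNnz (squareLayer I C).A ≤ 4 := matNnz_le_mul _
  have hb : vecNnz (squareLayer I C).b ≤ 2 := vecNnz_le _
  have hG : matNnz (squareLayer I C).G = 0 := matNnz_zero
  have hβ : matNnz (squareLayer I C).β ≤ 2 + 2 :=
    (matNnz_reluCoeff _ _).trans_le (add_le_add (vecNnz_le _) (vecNnz_le _))
  rw [ResKANLayer.nnz]
  omega

lemma nnz_combineLayer (I : ℕ) : (combineLayer I).nnz = 3 := by
  have hβ : matNnz (combineLayer I).β = 1 := by
    simp [combineLayer, matNnz_reluCoeff, vecNnz_eq_sum]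
  rw [ResKANLayer.nnz, hβ]
  simp [combineLayer, matNnz_eq_sum_vecNnz, vecNnz_eq_sum]

end PairMultiplication

section Product

/-- The Res-KAN multiplying `n + 1` numbers by repeatedly multiplying the last two. The result is
the product of the inputs when `C` is large enough. -/
def prodNet (I : ℕ) (C : ℝ) : (n : ℕ) → ResKAN I (n + 1) 1
  | 0 => .ofAffine I 1 0
  | n + 1 => .cons ((squareLayer I C).carry n) (.cons ((combineLayer I).carry n) (prodNet I C n))

lemma splineFree_prodNet (I : ℕ) (C : ℝ) (n : ℕ) : (prodNet I C n).SplineFree := by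
  induction n with
  | zero => exact ResKAN.splineFree_ofAffine _ _
  | succ n ih =>
    have hsquare : (squareLayer I C).SplineFree := ResKANLayer.splineFree_of_β_eq rfl
    have hcombine : (combineLayer I).SplineFree := ResKANLayer.splineFree_of_β_eq rfl
    exact .cons (hsquare.carry n) (.cons (hcombine.carry n) ih)

lemma depth_prodNet (I : ℕ) (C : ℝ) (n : ℕ) : (prodNet I C n).depth = 2 * n := by
  induction n with
  | zero => rfl
  | succ n ih => rw [prodNet, ResKAN.depth_cons, ResKAN.depth_cons, ih]; ring

lemma width_prodNet (I : ℕ) (C : ℝ) (n : ℕ) : (prodNet I C n).width = n + 1 := by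
  induction n with
  | zero => exact ResKAN.width_ofAffine _ _
  | succ n ih => rw [prodNet, ResKAN.width_cons, ResKAN.width_cons, ih]; omega

lemma nnz_prodNet_le (I : ℕ) (C : ℝ) (n : ℕ) : (prodNet I C n).nnz ≤ n ^ 2 + 12 * n + 1 := by
  induction n with
  | zero => simp [prodNet, ResKAN.nnz_ofAffine]
  | succ n ih =>
    rw [prodNet, ResKAN.nnz_cons, ResKAN.nnz_cons, ResKANLayer.nnz_carry, ResKANLayer.nnz_carry,
      nnz_combineLayer]
    linarith [nnz_squareLayer_le I C]

lemma eval_prodNet_succ_append (I n : ℕ) {C a p : ℝ} (u : Fin n → ℝ) (h : |a| + |p| ≤ C) :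
    (prodNet I C (n + 1)).eval (Fin.append (n := 2) u ![a, p])
      = (prodNet I C n).eval (Fin.append u ![a * p]) := by
  rw [prodNet, ResKAN.eval_cons, ResKAN.eval_cons, ResKANLayer.carry_apply_append,
    ResKANLayer.carry_apply_append, combineLayer_apply_squareLayer_apply I h]

lemma eval_prodNet (I : ℕ) {C : ℝ} {n : ℕ} (x : Fin (n + 1) → ℝ) (hx : ∏ i, (1 + |x i|) ≤ C) :
    (prodNet I C n).eval x 0 = ∏ i, x i := by
  induction n with
  | zero => simp [prodNet, ResKAN.eval_ofAffine]
  | succ n ih =>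
    obtain ⟨u, a, p, rfl⟩ := exists_eq_append_pair x
    have hprod : (∏ i, (1 + |u i|)) * ((1 + |a|) * (1 + |p|)) ≤ C := by
      rw [Fin.prod_univ_add (a := n) (b := 2)] at hx
      simpa using hx
    have hu : 1 ≤ ∏ i, (1 + |u i|) := Finset.one_le_prod fun i => by simp
    have hmul : |a| + |p| ≤ C := by
      calc |a| + |p| ≤ (1 + |a|) * (1 + |p|) := by
            nlinarith [mul_nonneg (abs_nonneg a) (abs_nonneg p)]
        _ ≤ (∏ i, (1 + |u i|)) * ((1 + |a|) * (1 + |p|)) :=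
            le_mul_of_one_le_left (by positivity) hu
        _ ≤ C := hprod
    have hmerged : ∏ i, (1 + |Fin.append u ![a * p] i|) ≤ C := by
      calc ∏ i, (1 + |Fin.append u ![a * p] i|) = (∏ i, (1 + |u i|)) * (1 + |a * p|) := by
            simp [Fin.prod_univ_add, -abs_mul]
        _ ≤ (∏ i, (1 + |u i|)) * ((1 + |a|) * (1 + |p|)) := by
            gcongr
            nlinarith [abs_mul a p, abs_nonneg a, abs_nonneg p]
        _ ≤ C := hprod
    rw [eval_prodNet_succ_append I n u hmul, ih _ hmerged, Fin.prod_univ_add,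
      Fin.prod_univ_add (a := n) (b := 2)]
    simp

end Product

end

theorem statement0_general (I d : ℕ) (hd : 1 ≤ d) (M : ℝ) :
    ∃ net : ResKAN I d 1, net.SplineFree ∧ net.depth = 2 * (d - 1) ∧ net.width = d ∧
      net.nnz ≤ d ^ 2 + 10 * d - 10 ∧
      ∀ x : Fin d → ℝ, (∀ i, x i ∈ Set.Icc (-M) M) → net.eval x 0 = ∏ i, x i := by
  obtain ⟨n, rfl⟩ := Nat.exists_eq_add_of_le' hd
  refine ⟨prodNet I ((1 + M) ^ (n + 1)) n, splineFree_prodNet _ _ n, depth_prodNet _ _ n,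
    width_prodNet _ _ n, (nnz_prodNet_le _ _ n).trans_eq ?_, fun x hx => eval_prodNet I x ?_⟩
  · exact (Nat.sub_eq_of_eq_add (by ring)).symm
  · calc ∏ i, (1 + |x i|) ≤ ∏ _i : Fin (n + 1), (1 + M) := by
          gcongr with i
          exact abs_le.2 (hx i)
      _ = (1 + M) ^ (n + 1) := by simp

/-- Exact multiplication on arbitrarily large hypercubes.
For every `d ≥ 2` and `M > 0` there is a Res-KAN `×²_d : ℝ^d → ℝ`, whose activation
coefficient matrices are supported only on the ReLU and ReLU² basis entries (so the
sparsity rule holds for every smoothness parameter `α > 0`), with depth `2(d-1)`,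
width at most `d + 4`, and at most `d² + 33d - 36` nonzero parameters, computing
`x ↦ ∏ i, x i` on `[-M, M]^d`. -/
theorem statement0 (d : ℕ) (hd : 2 ≤ d) (M : ℝ) (hM : 0 < M) :
    ∃ (I : ℕ) (net : ResKAN I d 1), 1 ≤ I ∧
      (∀ l, l < net.L → ∀ (i : Fin (I + 3)) (j : Fin (net.dims (l + 1))),
        (i : ℕ) ≤ I → (net.layers l).β i j = 0) ∧
      (∀ α : ℝ, 0 < α → net.Sparsity α) ∧
      net.depth = 2 * (d - 1) ∧
      net.width ≤ d + 4 ∧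
      net.nnz ≤ d ^ 2 + 33 * d - 36 ∧
      ∀ x : Fin d → ℝ, (∀ i, x i ∈ Set.Icc (-M) M) →
        net.eval x 0 = ∏ i, x i := by
  obtain ⟨net, hfree, hdepth, hwidth, hnnz, heval⟩ := statement0_general 1 d (by omega) M
  exact ⟨1, net, le_rfl, hfree, fun α _ => hfree.sparsity α, hdepth, by omega, by omega, heval⟩
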